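/- Let X be a compact Hausdorff topological space, f : X → X a minimal homeomorphism, and K ⊆ X a compact set with nonempty interior. For x ∈ X set ℓ⁺(x) = min{j ≥ 0 : f^j(x) ∈ int K}, ℓ⁻(x) = min{j > 0 : f^{-j}(x) ∈ int K}, L(x) = {j ∈ ℤ : −ℓ⁻(x) < j < ℓ⁺(x) and f^j(x) ∈ ∂K}, and X_i = {x ∈ X : #L(x) ≥ i} for i = 0, 1, 2, …. Then the function ℓ⁺ is locally constant on each set X_i \ X_{i+1}: for every x ∈ X_i \ X_{i+1} there is an open neighborhood U of x such that every y ∈ U ∩ (X_i \ X_{i+1}) satisfies ℓ⁺(y) = ℓ⁺(x). -/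

import Mathlib

/-- `ℓ⁺(x) = min {j ≥ 0 : f^j(x) ∈ int K}`. -/
noncomputable def ellPlus {X : Type*} [TopologicalSpace X] (f : X ≃ₜ X) (K : Set X)
    (x : X) : ℕ :=
  sInf {j : ℕ | (⇑f)^[j] x ∈ interior K}

/-- `ℓ⁻(x) = min {j > 0 : f^{-j}(x) ∈ int K}`. -/
noncomputable def ellMinus {X : Type*} [TopologicalSpace X] (f : X ≃ₜ X) (K : Set X)
    (x : X) : ℕ :=
  sInf {j : ℕ | 0 < j ∧ (⇑f.symm)^[j] x ∈ interior K}

/-- `L(x) = {j ∈ ℤ : -ℓ⁻(x) < j < ℓ⁺(x), f^j(x) ∈ ∂K}`. -/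
noncomputable def Lset {X : Type*} [TopologicalSpace X] (f : X ≃ₜ X) (K : Set X)
    (x : X) : Set ℤ :=
  {j : ℤ | -(ellMinus f K x : ℤ) < j ∧ j < (ellPlus f K x : ℤ) ∧
    (f.toEquiv ^ j) x ∈ frontier K}

/-- `X_i = {x ∈ X : #L(x) ≥ i}`, the dynamical stratification associated to `K`. -/
noncomputable def stratum {X : Type*} [TopologicalSpace X] (f : X ≃ₜ X) (K : Set X)
    (i : ℕ) : Set X :=
  {x : X | i ≤ (Lset f K x).ncard}

/-!
Compactness and minimality make every orbit visit `int K` both in the future and in the past. The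
itinerary of `x` between its last visit to `int K` in the past and its first visit from time
`0` on is finite, and at each time strictly in between it is either on `∂K` or off `K`. Visits to
the open set `int K` and absences from the closed set `K` persist for all `y` close to `x`, so
`ℓ⁺` and `ℓ⁻` can only drop near `x`, and `L(y) ⊆ L(x)`. If `ℓ⁺(y) < ℓ⁺(x)`, then the time `ℓ⁺(y)`,
at which `y` is in `K`, belongs to `L(x)` but not to `L(y)`; so `#L(y) < #L(x)`, and this is
excluded when `x` and `y` lie in the same `X_i \ X_{i+1}`.
-/

open Set Filter Topology

theorem zpow_natCast_apply_eq_iterate {α : Type*} (σ : Equiv.Perm α) (k : ℕ) (x : α) :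
    (σ ^ (k : ℤ)) x = σ^[k] x := by
  rw [zpow_natCast, Equiv.Perm.iterate_eq_pow]

theorem zpow_neg_natCast_apply_eq_iterate_symm {α : Type*} (σ : Equiv.Perm α) (k : ℕ) (x : α) :
    (σ ^ (-(k : ℤ))) x = σ.symm^[k] x := by
  rw [← inv_zpow', zpow_natCast_apply_eq_iterate, Equiv.Perm.inv_def]

section Orbits

variable {X : Type*} [TopologicalSpace X] (f : X ≃ₜ X)

theorem continuous_zpow_toEquiv (n : ℤ) : Continuous (f.toEquiv ^ n) := by
  obtain ⟨k, rfl | rfl⟩ := n.eq_nat_or_neg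
  · exact (f.continuous.iterate k).congr fun x => (zpow_natCast_apply_eq_iterate f.toEquiv k x).symm
  · exact (f.symm.continuous.iterate k).congr fun x =>
      (zpow_neg_natCast_apply_eq_iterate_symm f.toEquiv k x).symm

variable {f} {V : Set X}

theorem eventually_zpow_mem {x : X} {n : ℤ} (hV : IsOpen V) (hx : (f.toEquiv ^ n) x ∈ V) :
    ∀ᶠ y in 𝓝 x, (f.toEquiv ^ n) y ∈ V :=
  (continuous_zpow_toEquiv f n).continuousAt.eventually_mem (hV.mem_nhds hx)

variable [CompactSpace X]

theorem exists_natAbs_le_zpow_mem (hV : IsOpen V) (hvisit : ∀ x, ∃ n : ℤ, (f.toEquiv ^ n) x ∈ V) :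
    ∃ N : ℕ, ∀ x, ∃ n : ℤ, n.natAbs ≤ N ∧ (f.toEquiv ^ n) x ∈ V := by
  obtain ⟨times, hcover⟩ := isCompact_univ.elim_finite_subcover
    (fun n : ℤ => (f.toEquiv ^ n) ⁻¹' V) (fun n => hV.preimage (continuous_zpow_toEquiv f n))
    fun x _ => mem_iUnion.2 (hvisit x)
  refine ⟨times.sup Int.natAbs, fun x => ?_⟩
  obtain ⟨n, hn, hx⟩ := mem_iUnion₂.1 (hcover (mem_univ x))
  exact ⟨n, Finset.le_sup (f := Int.natAbs) hn, hx⟩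

theorem exists_ge_zpow_mem (hV : IsOpen V) (hvisit : ∀ x, ∃ n : ℤ, (f.toEquiv ^ n) x ∈ V)
    (x : X) (m : ℤ) : ∃ n : ℤ, m ≤ n ∧ (f.toEquiv ^ n) x ∈ V := by
  obtain ⟨N, hN⟩ := exists_natAbs_le_zpow_mem hV hvisit
  obtain ⟨n, hn, hmem⟩ := hN ((f.toEquiv ^ (m + N)) x)
  rw [← Equiv.Perm.mul_apply, ← zpow_add] at hmem
  exact ⟨n + (m + N), by omega, hmem⟩

theorem exists_lt_zpow_mem (hV : IsOpen V) (hvisit : ∀ x, ∃ n : ℤ, (f.toEquiv ^ n) x ∈ V)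
    (x : X) (m : ℤ) : ∃ n : ℤ, n < m ∧ (f.toEquiv ^ n) x ∈ V := by
  obtain ⟨N, hN⟩ := exists_natAbs_le_zpow_mem hV hvisit
  obtain ⟨n, hn, hmem⟩ := hN ((f.toEquiv ^ (m - 1 - N)) x)
  rw [← Equiv.Perm.mul_apply, ← zpow_add] at hmem
  exact ⟨n + (m - 1 - N), by omega, hmem⟩

end Orbits

section Stratification

variable {X : Type*} [TopologicalSpace X] {f : X ≃ₜ X} {K : Set X} {x : X} {n : ℤ}

theorem ellPlus_le (hn : 0 ≤ n) (hmem : (f.toEquiv ^ n) x ∈ interior K) :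
    (ellPlus f K x : ℤ) ≤ n := by
  lift n to ℕ using hn
  rw [zpow_natCast_apply_eq_iterate] at hmem
  have hle : ellPlus f K x ≤ n := Nat.sInf_le hmem
  exact_mod_cast hle

theorem zpow_ellPlus_mem_interior (h : ∃ n : ℤ, 0 ≤ n ∧ (f.toEquiv ^ n) x ∈ interior K) :
    (f.toEquiv ^ (ellPlus f K x : ℤ)) x ∈ interior K := by
  obtain ⟨n, hn, hmem⟩ := h
  lift n to ℕ using hn
  rw [zpow_natCast_apply_eq_iterate] at hmem ⊢
  exact Nat.sInf_mem (s := {k | (⇑f)^[k] x ∈ interior K}) ⟨n, hmem⟩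

theorem ellMinus_le_neg (hn : n < 0) (hmem : (f.toEquiv ^ n) x ∈ interior K) :
    (ellMinus f K x : ℤ) ≤ -n := by
  obtain ⟨k, rfl⟩ := Int.exists_eq_neg_ofNat hn.le
  rw [zpow_neg_natCast_apply_eq_iterate_symm] at hmem
  have hle : ellMinus f K x ≤ k := Nat.sInf_le ⟨by omega, hmem⟩
  rw [neg_neg]
  exact_mod_cast hle

theorem ellMinus_pos_and_zpow_neg_mem_interior
    (h : ∃ n : ℤ, n < 0 ∧ (f.toEquiv ^ n) x ∈ interior K) :
    0 < ellMinus f K x ∧ (f.toEquiv ^ (-(ellMinus f K x : ℤ))) x ∈ interior K := by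
  obtain ⟨n, hn, hmem⟩ := h
  obtain ⟨k, rfl⟩ := Int.exists_eq_neg_ofNat hn.le
  rw [zpow_neg_natCast_apply_eq_iterate_symm] at hmem ⊢
  exact Nat.sInf_mem (s := {k | 0 < k ∧ (⇑f.symm)^[k] x ∈ interior K}) ⟨k, by omega, hmem⟩

theorem zpow_notMem_interior (hn : n ∈ Ioo (-(ellMinus f K x : ℤ)) (ellPlus f K x)) :
    (f.toEquiv ^ n) x ∉ interior K := by
  intro hmem
  rcases le_or_gt 0 n with hnonneg | hneg
  · exact (ellPlus_le hnonneg hmem).not_gt hn.2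
  · exact (ellMinus_le_neg hneg hmem).not_gt (neg_lt.1 hn.1)

theorem Lset_eq_sep_Ioo (hK : IsClosed K) (x : X) :
    Lset f K x =
      {n ∈ Ioo (-(ellMinus f K x : ℤ)) (ellPlus f K x) | (f.toEquiv ^ n) x ∈ K} := by
  ext n
  simp only [Lset, hK.frontier_eq, mem_ofPred_eq, Set.mem_sdiff, mem_Ioo, ← and_assoc]
  exact and_iff_left_of_imp fun hn => zpow_notMem_interior hn.1

theorem Lset_finite (f : X ≃ₜ X) (K : Set X) (x : X) : (Lset f K x).Finite :=
  (finite_Ioo _ _).subset fun _ hn => ⟨hn.1, hn.2.1⟩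

theorem eventually_ellPlus_le (h : ∃ n : ℤ, 0 ≤ n ∧ (f.toEquiv ^ n) x ∈ interior K) :
    ∀ᶠ y in 𝓝 x, ellPlus f K y ≤ ellPlus f K x := by
  filter_upwards [eventually_zpow_mem isOpen_interior (zpow_ellPlus_mem_interior h)] with y hy
  exact_mod_cast ellPlus_le (Int.natCast_nonneg _) hy

theorem eventually_ellMinus_le (h : ∃ n : ℤ, n < 0 ∧ (f.toEquiv ^ n) x ∈ interior K) :
    ∀ᶠ y in 𝓝 x, ellMinus f K y ≤ ellMinus f K x := by
  obtain ⟨hpos, hmem⟩ := ellMinus_pos_and_zpow_neg_mem_interior h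
  filter_upwards [eventually_zpow_mem isOpen_interior hmem] with y hy
  have hle := ellMinus_le_neg (neg_neg_of_pos (Int.natCast_pos.2 hpos)) hy
  rw [neg_neg] at hle
  exact_mod_cast hle

theorem eventually_zpow_mem_imp_mem_Lset (hK : IsClosed K) (x : X) :
    ∀ᶠ y in 𝓝 x, ∀ n ∈ Ioo (-(ellMinus f K x : ℤ)) (ellPlus f K x),
      (f.toEquiv ^ n) y ∈ K → n ∈ Lset f K x := by
  refine (eventually_all_finite (finite_Ioo _ _)).2 fun n hn => ?_
  by_cases hmem : (f.toEquiv ^ n) x ∈ K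
  · have hL : n ∈ Lset f K x := by
      rw [Lset_eq_sep_Ioo hK]
      exact ⟨hn, hmem⟩
    exact .of_forall fun _ _ => hL
  · filter_upwards [eventually_zpow_mem hK.isOpen_compl hmem] with y hy hyK
    exact absurd hyK hy

theorem eventually_Lset_subset (hK : IsClosed K)
    (hpos : ∃ n : ℤ, 0 ≤ n ∧ (f.toEquiv ^ n) x ∈ interior K)
    (hneg : ∃ n : ℤ, n < 0 ∧ (f.toEquiv ^ n) x ∈ interior K) :
    ∀ᶠ y in 𝓝 x, Lset f K y ⊆ Lset f K x := by
  filter_upwards [eventually_ellPlus_le hpos, eventually_ellMinus_le hneg,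
    eventually_zpow_mem_imp_mem_Lset hK x] with y hplus hminus hL n hn
  refine hL n ?_ (hK.frontier_subset hn.2.2)
  exact Ioo_subset_Ioo (neg_le_neg (Int.ofNat_le.2 hminus)) (Int.ofNat_le.2 hplus)
    ⟨hn.1, hn.2.1⟩

theorem eventually_ellPlus_eq_of_ncard_le (hK : IsClosed K)
    (hpos : ∃ n : ℤ, 0 ≤ n ∧ (f.toEquiv ^ n) x ∈ interior K)
    (hneg : ∃ n : ℤ, n < 0 ∧ (f.toEquiv ^ n) x ∈ interior K) :
    ∀ᶠ y in 𝓝 x, (Lset f K x).ncard ≤ (Lset f K y).ncard →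
      ellPlus f K y = ellPlus f K x := by
  filter_upwards [eventually_zpow_mem isOpen_interior (zpow_ellPlus_mem_interior hpos),
    eventually_ellPlus_le hpos, eventually_Lset_subset hK hpos hneg,
    eventually_zpow_mem_imp_mem_Lset hK x] with y hvisit hle hsub hL hcard
  have hLeq : Lset f K y = Lset f K x := eq_of_subset_of_ncard_le hsub hcard (Lset_finite f K x)
  have hyK : (f.toEquiv ^ (ellPlus f K y : ℤ)) y ∈ K :=
    interior_subset (zpow_ellPlus_mem_interior ⟨_, Int.natCast_nonneg _, hvisit⟩)
  by_contra hne
  have hlt : ellPlus f K y < ellPlus f K x := hle.lt_of_ne hne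
  have hminus : 0 < ellMinus f K x := (ellMinus_pos_and_zpow_neg_mem_interior hneg).1
  have hmem : (ellPlus f K y : ℤ) ∈ Lset f K y := by
    rw [hLeq]
    exact hL _ ⟨by omega, by omega⟩ hyK
  exact lt_irrefl _ hmem.2.1

theorem mem_stratum_diff_succ_iff {i : ℕ} :
    x ∈ stratum f K i \ stratum f K (i + 1) ↔ (Lset f K x).ncard = i := by
  simp only [stratum, Set.mem_sdiff, mem_ofPred_eq]
  omega

theorem ellPlus_locally_constant_on_strata_general (hK : IsClosed K) {i : ℕ}
    (hx : x ∈ stratum f K i \ stratum f K (i + 1))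
    (hpos : ∃ n : ℤ, 0 ≤ n ∧ (f.toEquiv ^ n) x ∈ interior K)
    (hneg : ∃ n : ℤ, n < 0 ∧ (f.toEquiv ^ n) x ∈ interior K) :
    ∃ U : Set X, IsOpen U ∧ x ∈ U ∧
      ∀ y ∈ U ∩ (stratum f K i \ stratum f K (i + 1)), ellPlus f K y = ellPlus f K x := by
  obtain ⟨U, hU, hUo, hxU⟩ :=
    eventually_nhds_iff.1 (eventually_ellPlus_eq_of_ncard_le hK hpos hneg)
  refine ⟨U, hUo, hxU, fun y ⟨hyU, hy⟩ => hU y hyU ?_⟩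
  rw [mem_stratum_diff_succ_iff.1 hx, mem_stratum_diff_succ_iff.1 hy]

end Stratification

/-- (Lemma 3.1 of the paper.) The function `ℓ⁺` is locally constant on
each set `X_i \ X_{i+1}` of the dynamical stratification. -/
theorem ellPlus_locally_constant_on_strata
    {X : Type*} [TopologicalSpace X] [CompactSpace X] [T2Space X]
    (f : X ≃ₜ X)
    (hmin : ∀ x : X, Dense (Set.range fun n : ℤ => (f.toEquiv ^ n) x))
    (K : Set X) (hKc : IsCompact K) (hK : (interior K).Nonempty) :
    ∀ i : ℕ, ∀ x ∈ stratum f K i \ stratum f K (i + 1),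
      ∃ U : Set X, IsOpen U ∧ x ∈ U ∧
        ∀ y ∈ U ∩ (stratum f K i \ stratum f K (i + 1)),
          ellPlus f K y = ellPlus f K x := by
  intro i x hx
  have hvisit (y : X) : ∃ n : ℤ, (f.toEquiv ^ n) y ∈ interior K := by
    simpa [Set.Nonempty] using (hmin y).inter_open_nonempty _ isOpen_interior hK
  exact ellPlus_locally_constant_on_strata_general hKc.isClosed hx
    (exists_ge_zpow_mem isOpen_interior hvisit x 0) (exists_lt_zpow_mem isOpen_interior hvisit x 0)
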